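/- arXiv:1806.00382 — 2 statements merged into one kernel-verified Lean document; each statement's English description precedes it below -/
import Mathlib

section
/- Let 1 ≤ p < ∞ and let w ∈ 𝒲 satisfy condition (NUC). Then there exist a constant C ≥ 1, pairwise disjoint nonempty finite sets A_{k,i} ⊂ ℕ (k ≥ 1, 1 ≤ i ≤ k) and positive reals c_k (k ≥ 1) such that for every finitely supported family of reals (a_{k,i})_{k≥1, 1≤i≤k}, the sequence b = (b_j)_{j≥1} defined by b_j = a_{k,i}/c_k if j ∈ A_{k,i} and b_j = 0 otherwise, satisfies C^{-1}·(∑_{k=1}^∞ max_{1≤i≤k}|a_{k,i}|^p)^{1/p} ≤ ‖b‖_{g(w,p)} ≤ C·(∑_{k=1}^∞ max_{1≤i≤k}|a_{k,i}|^p)^{1/p}. That is, the Garling sequence space g(w,p) contains a constant-coefficient block-basic copy of W_p = (⊕_{k=1}^∞ ℓ_∞^k)_{ℓ_p}. -/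
/-!
Write `W(n) = ∑_{i<n} w i`. Level `k` of the block system consists of `k` consecutive intervals
`A (k, 1), …, A (k, k)` of the same length `n k`, and the normalisation is `c k = W(n k) ^ (1/p)`;
the levels follow each other in increasing order. The lengths satisfy (`exists_lengths`)

* `W(k * n k) ≤ 2 * W(n k)`, which is possible by (NUC) and the concavity of `W`, and
* `W(n 0 + ⋯ + n (k-1)) ≤ W(n k) / 2`, which is possible since `W` is unbounded.

In terms of `p`-th powers, the first property bounds the contribution of a whole level to any
subsequence sum by twice `max_i |a (k, i)| ^ p`, and the contributions of different levels add up
(`upper_sum`). For the lower bound, select in each level one interval on which `|a (k, i)|` is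
maximal, and take the subsequence enumerating the selected intervals (`lower_sum`). The `k`-th one
is shifted by `n 1 + ⋯ + n (k-1)` positions, so by the second property it still contributes at
least half of `max_i |a (k, i)| ^ p`.
-/

/-- The Garling norm `‖b‖_{g(w,p)} = sup (∑_k |b_{n_k}|^p w_k)^{1/p}` of a real sequence
`b`, the supremum taken over all strictly increasing sequences `n_1 < n_2 < ⋯` of indices
(strictly monotone maps `f : ℕ → ℕ`; everything `0`-indexed). -/
noncomputable def garlingNorm (w : ℕ → ℝ) (p : ℝ) (b : ℕ → ℝ) : ℝ :=
  ⨆ f : {f : ℕ → ℕ // StrictMono f}, (∑' k : ℕ, |b (f.1 k)| ^ p * w k) ^ (1 / p)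

/-- The norm of the canonical-basis expansion `(a_{k,i})_{k ≥ 1, 1 ≤ i ≤ k}` in
`W_p = (⊕_{k=1}^∞ ℓ_∞^k)_{ℓ_p}`, namely `(∑_k max_{1 ≤ i ≤ k} |a_{k,i}|^p)^{1/p}`. -/
noncomputable def WpNorm (p : ℝ) (a : ℕ × ℕ → ℝ) : ℝ :=
  (∑' k : ℕ, (⨆ i : {i : ℕ // 1 ≤ i ∧ i ≤ k}, |a (k, i.1)|) ^ p) ^ (1 / p)

/-- Along an antitone weight, a finite sum over arbitrary indices is largest over an initial
segment. -/
lemma sum_le_sum_range_of_card_le (w : ℕ → ℝ) (hw_pos : ∀ i, 0 < w i) (hw_anti : Antitone w)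
    (F : Finset ℕ) (n : ℕ) (hF : F.card ≤ n) :
    ∑ m ∈ F, w m ≤ ∑ i ∈ Finset.range n, w i := by
  have h1 : ∑ m ∈ F, w m ≤ ∑ i ∈ Finset.range F.card, w i := by
    induction F using Finset.induction_on_max generalizing n with
    | empty => simp
    | insert a s ha ih =>
      have hmem : a ∉ s := fun h => lt_irrefl _ (ha a h)
      have hcard : s.card ≤ a := by
        simpa using Finset.card_le_card (fun x hx => Finset.mem_range.2 (ha x hx) :
          s ⊆ Finset.range a)
      rw [Finset.sum_insert hmem, Finset.card_insert_of_notMem hmem, Finset.sum_range_succ]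
      linarith [ih s.card le_rfl, hw_anti hcard]
  exact h1.trans (Finset.sum_le_sum_of_subset_of_nonneg (Finset.range_mono hF)
    fun i _ _ => (hw_pos i).le)

/-- Concavity of the partial sums: each further block of length `n` contributes at most as much
as the second one. -/
lemma sum_range_mul_le (w : ℕ → ℝ) (hw_pos : ∀ i, 0 < w i) (hw_anti : Antitone w) (k n : ℕ) :
    ∑ i ∈ Finset.range (k * n), w i ≤ ∑ i ∈ Finset.range n, w i +
      k * (∑ i ∈ Finset.range (2 * n), w i - ∑ i ∈ Finset.range n, w i) := by
  have h2 : ∑ i ∈ Finset.range (2 * n), w i - ∑ i ∈ Finset.range n, w i =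
      ∑ i ∈ Finset.range n, w (n + i) := by
    rw [two_mul, Finset.sum_range_add]; ring
  rw [h2]
  induction k with
  | zero => simpa using Finset.sum_nonneg fun i _ => (hw_pos i).le
  | succ k ih =>
    rcases Nat.eq_zero_or_pos k with rfl | hk
    · simpa using Finset.sum_nonneg fun i _ => (hw_pos (n + i)).le
    · have h3 : ∑ i ∈ Finset.range n, w (k * n + i) ≤ ∑ i ∈ Finset.range n, w (n + i) :=
        Finset.sum_le_sum fun i _ => hw_anti (by nlinarith)
      rw [add_mul, one_mul, Finset.sum_range_add]
      push_cast
      linarith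

/-- The use of (NUC): there are arbitrarily long initial segments whose weight is at most doubled
when their length is multiplied by `k`. Every single ratio in (NUC) exceeds `1`, so ratios close to
`1` occur only for large `n`. -/
lemma exists_length (w : ℕ → ℝ) (hw_pos : ∀ i, 0 < w i) (hw_anti : Antitone w)
    (hw_nonsum : ¬ Summable w)
    (hw_nuc : (⨅ n : ℕ, (∑ i ∈ Finset.range (2 * (n + 1)), w i) /
      (∑ i ∈ Finset.range (n + 1), w i)) = 1) (k s : ℕ) :
    ∃ n : ℕ, 1 ≤ n ∧
      ∑ i ∈ Finset.range (k * n), w i ≤ 2 * ∑ i ∈ Finset.range n, w i ∧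
      2 * ∑ i ∈ Finset.range s, w i ≤ ∑ i ∈ Finset.range n, w i := by
  have htop := (not_summable_iff_tendsto_nat_atTop_of_nonneg fun i => (hw_pos i).le).1 hw_nonsum
  obtain ⟨n₀, hn₀⟩ := Filter.eventually_atTop.1
    (htop.eventually_ge_atTop (2 * ∑ i ∈ Finset.range s, w i))
  have hpos : ∀ n : ℕ, 0 < ∑ i ∈ Finset.range (n + 1), w i := fun n =>
    Finset.sum_pos (fun i _ => hw_pos i) (by simp)
  have hmono : ∀ m n : ℕ, m ≤ n → ∑ i ∈ Finset.range m, w i ≤ ∑ i ∈ Finset.range n, w i :=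
    fun m n h => Finset.sum_le_sum_of_subset_of_nonneg (Finset.range_mono h)
      fun i _ _ => (hw_pos i).le
  set δ : ℝ := min (1 / (k + 1)) (w (2 * n₀) / ∑ i ∈ Finset.range (n₀ + 1), w i) with hδ
  have hδpos : 0 < δ := lt_min (by positivity) (div_pos (hw_pos _) (hpos _))
  obtain ⟨n, hn⟩ := exists_lt_of_ciInf_lt (by rw [hw_nuc]; linarith :
    (⨅ n : ℕ, (∑ i ∈ Finset.range (2 * (n + 1)), w i) /
      (∑ i ∈ Finset.range (n + 1), w i)) < 1 + δ)
  rw [div_lt_iff₀ (hpos n)] at hn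
  have hn' : n₀ ≤ n + 1 := by
    by_contra! hlt
    have e1 : ∑ i ∈ Finset.range (n + 1), w i + w (2 * n + 1) ≤
        ∑ i ∈ Finset.range (2 * (n + 1)), w i := by
      rw [show 2 * (n + 1) = (2 * n + 1) + 1 by ring, Finset.sum_range_succ w (2 * n + 1)]
      linarith [hmono (n + 1) (2 * n + 1) (by omega)]
    have e2 : w (2 * n₀) ≤ w (2 * n + 1) := hw_anti (by omega)
    have e3 : δ * ∑ i ∈ Finset.range (n + 1), w i ≤ w (2 * n₀) := by
      calc δ * ∑ i ∈ Finset.range (n + 1), w i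
          ≤ (w (2 * n₀) / ∑ i ∈ Finset.range (n₀ + 1), w i) *
              ∑ i ∈ Finset.range (n₀ + 1), w i :=
            mul_le_mul (min_le_right _ _) (hmono _ _ (by omega)) (hpos n).le
              (div_pos (hw_pos _) (hpos _)).le
        _ = w (2 * n₀) := div_mul_cancel₀ _ (hpos _).ne'
    linarith
  refine ⟨n + 1, by omega, ?_, hn₀ _ hn'⟩
  have h1 := sum_range_mul_le w hw_pos hw_anti k (n + 1)
  have h2 : (k : ℝ) * δ ≤ 1 := by
    calc (k : ℝ) * δ ≤ k * (1 / (k + 1)) := by gcongr; exact min_le_left _ _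
      _ ≤ 1 := by rw [mul_one_div, div_le_one (by positivity)]; linarith
  have h3 : (k : ℝ) * (∑ i ∈ Finset.range (2 * (n + 1)), w i - ∑ i ∈ Finset.range (n + 1), w i)
      ≤ k * (δ * ∑ i ∈ Finset.range (n + 1), w i) := by gcongr; linarith
  nlinarith [hpos n]

/-- Upper estimate along one subsequence `f`: if `B` is dominated by the sum over `k < K` of
`M k / W(n k)` times the indicator of the block `E k`, each block contributes at most `2 * M k`. -/
lemma upper_sum (w : ℕ → ℝ) (hw_pos : ∀ i, 0 < w i) (hw_anti : Antitone w)
    (n : ℕ → ℕ) (hWpos : ∀ k, 0 < ∑ i ∈ Finset.range (n k), w i)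
    (hW : ∀ k, ∑ i ∈ Finset.range (k * n k), w i ≤ 2 * ∑ i ∈ Finset.range (n k), w i)
    (E : ℕ → Finset ℕ) (hE : ∀ k, (E k).card ≤ k * n k)
    (M : ℕ → ℝ) (hM : ∀ k, 0 ≤ M k) (K : ℕ) (B : ℕ → ℝ)
    (hB : ∀ j, B j ≤ ∑ k ∈ Finset.range K,
      if j ∈ E k then M k / ∑ i ∈ Finset.range (n k), w i else 0)
    (f : ℕ → ℕ) (hf : StrictMono f) (F : Finset ℕ) :
    ∑ m ∈ F, B (f m) * w m ≤ 2 * ∑ k ∈ Finset.range K, M k := by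
  calc ∑ m ∈ F, B (f m) * w m
      ≤ ∑ m ∈ F, ∑ k ∈ Finset.range K,
          (if f m ∈ E k then M k / ∑ i ∈ Finset.range (n k), w i else 0) * w m := by
        refine Finset.sum_le_sum fun m _ => ?_
        rw [← Finset.sum_mul]
        exact mul_le_mul_of_nonneg_right (hB _) (hw_pos m).le
    _ = ∑ k ∈ Finset.range K, (M k / ∑ i ∈ Finset.range (n k), w i) *
          ∑ m ∈ F with f m ∈ E k, w m := by
        rw [Finset.sum_comm]
        refine Finset.sum_congr rfl fun k _ => ?_
        rw [Finset.sum_filter, Finset.mul_sum]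
        refine Finset.sum_congr rfl fun m _ => ?_
        split_ifs <;> simp
    _ ≤ ∑ k ∈ Finset.range K, 2 * M k := by
        refine Finset.sum_le_sum fun k _ => ?_
        have h1 : ∑ m ∈ F with f m ∈ E k, w m ≤ 2 * ∑ i ∈ Finset.range (n k), w i := by
          refine (sum_le_sum_range_of_card_le w hw_pos hw_anti _ (k * n k) ?_).trans (hW k)
          refine le_trans ?_ (hE k)
          refine Finset.card_le_card_of_injOn f (fun m hm => ?_) hf.injective.injOn
          simpa using (Finset.mem_filter.1 hm).2
        calc _ ≤ (M k / ∑ i ∈ Finset.range (n k), w i) *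
              (2 * ∑ i ∈ Finset.range (n k), w i) :=
              mul_le_mul_of_nonneg_left h1 (div_nonneg (hM k) (hWpos k).le)
          _ = 2 * M k := by have := (hWpos k).ne'; field_simp
    _ = 2 * ∑ k ∈ Finset.range K, M k := by rw [Finset.mul_sum]

/-- Lower estimate: the increasing enumeration `f` of the union of the intervals
`[u k, u k + n k)`, `k ≥ 1`, meets the `k`-th interval after at most `s k = ∑_{l<k} n l` earlier
terms, and `W(n k) ≥ 2 W(s k)` makes the loss from this shift at most one half. -/
lemma lower_sum (w : ℕ → ℝ) (hw_pos : ∀ i, 0 < w i) (hw_anti : Antitone w)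
    (n u : ℕ → ℕ) (hn : ∀ k, 1 ≤ n k)
    (hs : ∀ k, 2 * ∑ i ∈ Finset.range (∑ l ∈ Finset.range k, n l), w i ≤
      ∑ i ∈ Finset.range (n k), w i)
    (hu : ∀ k l, 1 ≤ k → k < l → u k + n k ≤ u l)
    (M : ℕ → ℝ) (hM : ∀ k, 0 ≤ M k) (hM0 : M 0 = 0) (K : ℕ) (B : ℕ → ℝ)
    (hB : ∀ k, 1 ≤ k → k < K → ∀ j, u k ≤ j → j < u k + n k →
      B j = M k / ∑ i ∈ Finset.range (n k), w i) :
    ∃ f : ℕ → ℕ, StrictMono f ∧ ∃ F : Finset ℕ,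
      ∑ k ∈ Finset.range K, M k ≤ 2 * ∑ m ∈ F, B (f m) * w m := by
  classical
  set S : ℕ → Prop := fun j => ∃ k, 1 ≤ k ∧ u k ≤ j ∧ j < u k + n k with hS
  have hinf : (Set.ofPred S).Infinite := by
    refine Set.infinite_of_injective_forall_mem (f := fun k => u (k + 1)) ?_ ?_
    · refine (strictMono_nat_of_lt_succ fun k => ?_).injective
      have := hu (k + 1) (k + 1 + 1) (by omega) (by omega)
      have := hn (k + 1)
      omega
    · intro k
      exact ⟨k + 1, by omega, le_rfl, by have := hn (k + 1); omega⟩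
  set I : ℕ → Finset ℕ := fun k => Finset.Ico (u k) (u k + n k) with hI
  set T : Finset ℕ := (Finset.Ico 1 K).biUnion I with hT
  have hTS : ∀ j ∈ T, S j := by
    intro j hj
    simp only [hT, hI, Finset.mem_biUnion, Finset.mem_Ico] at hj
    obtain ⟨k, hk, hj⟩ := hj
    exact ⟨k, hk.1, hj⟩
  have hcount : ∀ k, 1 ≤ k → ∀ t, t < n k →
      Nat.count S (u k + t) ≤ (∑ l ∈ Finset.range k, n l) + t := by
    intro k hk t ht
    rw [Nat.count_eq_card_filter_range]
    have hsub : (Finset.range (u k + t)).filter S ⊆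
        (Finset.range k).biUnion I ∪ Finset.Ico (u k) (u k + t) := by
      intro j hj
      simp only [Finset.mem_filter, Finset.mem_range] at hj
      obtain ⟨hj, l, hl, hl1, hl2⟩ := hj
      simp only [hI, Finset.mem_union, Finset.mem_biUnion, Finset.mem_range, Finset.mem_Ico]
      rcases lt_trichotomy l k with h | h | h
      · exact Or.inl ⟨l, h, hl1, hl2⟩
      · subst h; exact Or.inr ⟨hl1, hj⟩
      · have := hu k l hk h
        omega
    refine (Finset.card_le_card hsub).trans ((Finset.card_union_le _ _).trans ?_)
    gcongr
    · refine Finset.card_biUnion_le.trans (Finset.sum_le_sum fun l _ => ?_)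
      simp [hI]
    · simp
  have hdisj : (↑(Finset.Ico 1 K) : Set ℕ).PairwiseDisjoint I := by
    intro k hk l hl hkl
    simp only [Finset.coe_Ico, Set.mem_Ico] at hk hl
    simp only [Function.onFun, hI]
    rw [Finset.disjoint_left]
    intro j hj1 hj2
    simp only [Finset.mem_Ico] at hj1 hj2
    rcases lt_or_gt_of_ne hkl with h | h
    · have := hu k l hk.1 h; omega
    · have := hu l k hl.1 h; omega
  refine ⟨Nat.nth S, Nat.nth_strictMono hinf, T.image (Nat.count S), ?_⟩
  have hinj : Set.InjOn (Nat.count S) (T : Set ℕ) := fun i hi j hj hij =>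
    Nat.count_injective (hTS i hi) (hTS j hj) hij
  rw [Finset.sum_image hinj]
  have e1 : ∑ j ∈ T, B (Nat.nth S (Nat.count S j)) * w (Nat.count S j) =
      ∑ j ∈ T, B j * w (Nat.count S j) :=
    Finset.sum_congr rfl fun j hj => by rw [Nat.nth_count (hTS j hj)]
  rw [e1, hT, Finset.sum_biUnion hdisj, Finset.mul_sum]
  have e2 : ∑ k ∈ Finset.range K, M k = ∑ k ∈ Finset.Ico 1 K, M k := by
    symm
    refine Finset.sum_subset (fun k hk => by simp at hk ⊢; omega) fun k hk hk' => ?_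
    have : k = 0 := by simp at hk hk'; omega
    rw [this, hM0]
  rw [e2]
  refine Finset.sum_le_sum fun k hk => ?_
  obtain ⟨hk1, hkK⟩ := Finset.mem_Ico.1 hk
  have hWpos : 0 < ∑ i ∈ Finset.range (n k), w i :=
    Finset.sum_pos (fun i _ => hw_pos i) (by have := hn k; simp; omega)
  have e3 : (M k / ∑ i ∈ Finset.range (n k), w i) *
      ∑ t ∈ Finset.range (n k), w ((∑ l ∈ Finset.range k, n l) + t) ≤
      ∑ j ∈ I k, B j * w (Nat.count S j) := by
    rw [hI, Finset.sum_Ico_eq_sum_range, Finset.mul_sum, Nat.add_sub_cancel_left]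
    refine Finset.sum_le_sum fun t ht => ?_
    have ht' := Finset.mem_range.1 ht
    rw [hB k hk1 hkK (u k + t) (by omega) (by omega)]
    exact mul_le_mul_of_nonneg_left (hw_anti (hcount k hk1 t ht')) (div_nonneg (hM k) hWpos.le)
  have e4 : ∑ i ∈ Finset.range (n k), w i ≤
      2 * ∑ t ∈ Finset.range (n k), w ((∑ l ∈ Finset.range k, n l) + t) := by
    have h1 := Finset.sum_range_add w (∑ l ∈ Finset.range k, n l) (n k)
    have h2 : ∑ i ∈ Finset.range (n k), w i ≤
        ∑ i ∈ Finset.range ((∑ l ∈ Finset.range k, n l) + n k), w i :=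
      Finset.sum_le_sum_of_subset_of_nonneg (Finset.range_mono (by omega))
        fun i _ _ => (hw_pos i).le
    linarith [hs k]
  calc M k = (M k / ∑ i ∈ Finset.range (n k), w i) * ∑ i ∈ Finset.range (n k), w i :=
        (div_mul_cancel₀ _ hWpos.ne').symm
    _ ≤ (M k / ∑ i ∈ Finset.range (n k), w i) *
        (2 * ∑ t ∈ Finset.range (n k), w ((∑ l ∈ Finset.range k, n l) + t)) :=
        mul_le_mul_of_nonneg_left e4 (div_nonneg (hM k) hWpos.le)
    _ ≤ 2 * ∑ j ∈ I k, B j * w (Nat.count S j) := by linarith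

/-- The block lengths, chosen recursively against the total length of the preceding ones. -/
lemma exists_lengths (w : ℕ → ℝ) (hw_pos : ∀ i, 0 < w i) (hw_anti : Antitone w)
    (hw_nonsum : ¬ Summable w)
    (hw_nuc : (⨅ n : ℕ, (∑ i ∈ Finset.range (2 * (n + 1)), w i) /
      (∑ i ∈ Finset.range (n + 1), w i)) = 1) :
    ∃ n : ℕ → ℕ, (∀ k, 1 ≤ n k) ∧
      (∀ k, ∑ i ∈ Finset.range (k * n k), w i ≤ 2 * ∑ i ∈ Finset.range (n k), w i) ∧
      (∀ k, 2 * ∑ i ∈ Finset.range (∑ l ∈ Finset.range k, n l), w i ≤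
        ∑ i ∈ Finset.range (n k), w i) := by
  choose g hg1 hg2 hg3 using exists_length w hw_pos hw_anti hw_nonsum hw_nuc
  let s : ℕ → ℕ := fun k => Nat.rec 0 (fun l t => t + g l t) k
  have hs : ∀ k, ∑ l ∈ Finset.range k, g l (s l) = s k := by
    intro k
    induction k with
    | zero => rfl
    | succ k ih => rw [Finset.sum_range_succ, ih]
  exact ⟨fun k => g k (s k), fun k => hg1 _ _, fun k => hg2 _ _, fun k => by
    rw [hs]; exact hg3 _ _⟩

/-- Let `1 ≤ p < ∞` and let `w ∈ 𝒲` (a positive, nonincreasing null weight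
with `w_1 = 1`, not summable; `0`-indexed, so `w 0` is the paper's `w_1`) satisfy
condition (NUC): `inf_{n ≥ 1} (∑_{i=1}^{2n} w_i)/(∑_{i=1}^n w_i) = 1`.  Then there exist
`C ≥ 1`, pairwise disjoint nonempty finite sets `A_{k,i} ⊂ ℕ` (`k ≥ 1`, `1 ≤ i ≤ k`) and
positive reals `c_k` such that for every finitely supported family `(a_{k,i})`, any
sequence `b` with `b_j = a_{k,i}/c_k` for `j ∈ A_{k,i}` and `b_j = 0` otherwise satisfies
`C⁻¹ (∑_k max_{1≤i≤k} |a_{k,i}|^p)^{1/p} ≤ ‖b‖_{g(w,p)} ≤ C (∑_k max_{1≤i≤k} |a_{k,i}|^p)^{1/p}`.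
That is, the Garling space `g(w,p)` contains a constant-coefficient block-basic copy of
`W_p = (⊕_{k=1}^∞ ℓ_∞^k)_{ℓ_p}`. -/
theorem stmt_3 (p : ℝ) (hp : 1 ≤ p)
    (w : ℕ → ℝ) (hw_pos : ∀ i, 0 < w i) (hw_one : w 0 = 1) (hw_anti : Antitone w)
    (hw_null : Filter.Tendsto w Filter.atTop (nhds 0)) (hw_nonsum : ¬ Summable w)
    (hw_nuc : (⨅ n : ℕ, (∑ i ∈ Finset.range (2 * (n + 1)), w i) /
      (∑ i ∈ Finset.range (n + 1), w i)) = 1) :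
    ∃ (C : ℝ) (A : ℕ × ℕ → Finset ℕ) (c : ℕ → ℝ), 1 ≤ C ∧
      (∀ k i : ℕ, 1 ≤ i → i ≤ k → (A (k, i)).Nonempty) ∧
      (∀ k i k' i' : ℕ, 1 ≤ i → i ≤ k → 1 ≤ i' → i' ≤ k' → (k, i) ≠ (k', i') →
        Disjoint (A (k, i)) (A (k', i'))) ∧
      (∀ k : ℕ, 1 ≤ k → 0 < c k) ∧
      ∀ a : ℕ × ℕ → ℝ, (Function.support a).Finite →
        (Function.support a ⊆ {z : ℕ × ℕ | 1 ≤ z.2 ∧ z.2 ≤ z.1}) →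
        ∀ b : ℕ → ℝ,
          (∀ k i : ℕ, 1 ≤ i → i ≤ k → ∀ j ∈ A (k, i), b j = a (k, i) / c k) →
          (∀ j : ℕ, (∀ k i : ℕ, 1 ≤ i → i ≤ k → j ∉ A (k, i)) → b j = 0) →
          C⁻¹ * WpNorm p a ≤ garlingNorm w p b ∧ garlingNorm w p b ≤ C * WpNorm p a := by
  obtain ⟨n, hn1, hn2, hn3⟩ := exists_lengths w hw_pos hw_anti hw_nonsum hw_nuc
  have hp0 : 0 < p := by linarith
  have hip0 : 0 < 1 / p := by positivity
  have hWpos : ∀ k, 0 < ∑ i ∈ Finset.range (n k), w i := fun k =>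
    Finset.sum_pos (fun i _ => hw_pos i) (by have := hn1 k; simp; omega)
  -- level `k` occupies `[N k, N (k + 1))`, split into `k` consecutive intervals of length `n k`
  set N : ℕ → ℕ := fun k => ∑ l ∈ Finset.range k, l * n l with hN
  have hNs : ∀ k, N (k + 1) = N k + k * n k := fun k => Finset.sum_range_succ _ _
  have hNmono : Monotone N := monotone_nat_of_le_succ fun k => by rw [hNs]; omega
  set A : ℕ × ℕ → Finset ℕ := fun z =>
    Finset.Ico (N z.1 + (z.2 - 1) * n z.1) (N z.1 + (z.2 - 1) * n z.1 + n z.1) with hA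
  have hidx : ∀ k i, 1 ≤ i → i ≤ k → (i - 1) * n k + n k ≤ k * n k := by
    intro k i h1 h2
    obtain ⟨i, rfl⟩ := Nat.exists_eq_add_of_le' h1
    rw [Nat.add_sub_cancel, ← Nat.succ_mul]
    exact Nat.mul_le_mul_right _ h2
  have hAE : ∀ k i, 1 ≤ i → i ≤ k → ∀ j ∈ A (k, i), N k ≤ j ∧ j < N (k + 1) := by
    intro k i h1 h2 j hj
    have := hidx k i h1 h2
    simp only [hA, Finset.mem_Ico] at hj
    rw [hNs]
    omega
  refine ⟨2, A, fun k => (∑ i ∈ Finset.range (n k), w i) ^ (1 / p), by norm_num, ?_, ?_, ?_, ?_⟩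
  · intro k i _ _
    have := hn1 k
    simp only [hA, Finset.nonempty_Ico]
    omega
  · intro k i k' i' h1 h2 h1' h2' hne
    rw [Finset.disjoint_left]
    intro j hj hj'
    have e1 := hAE k i h1 h2 j hj
    have e2 := hAE k' i' h1' h2' j hj'
    rcases lt_trichotomy k k' with h | h | h
    · have := hNmono (show k + 1 ≤ k' from h); omega
    · subst h
      have hi : i ≠ i' := fun h => hne (by rw [h])
      simp only [hA, Finset.mem_Ico] at hj hj'
      rcases lt_or_gt_of_ne hi with h | h
      · have := Nat.mul_le_mul_right (n k) (show (i - 1) + 1 ≤ i' - 1 by omega)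
        rw [Nat.succ_mul] at this
        omega
      · have := Nat.mul_le_mul_right (n k) (show (i' - 1) + 1 ≤ i - 1 by omega)
        rw [Nat.succ_mul] at this
        omega
    · have := hNmono (show k' + 1 ≤ k from h); omega
  · intro k _
    exact Real.rpow_pos_of_pos (hWpos k) _
  intro a hfin hsupp b hb hb0
  set R : ℕ → ℝ := fun k => ⨆ i : {i : ℕ // 1 ≤ i ∧ i ≤ k}, |a (k, i.1)| with hR
  set M : ℕ → ℝ := fun k => R k ^ p with hMdef
  have hR0 : ∀ k, 0 ≤ R k := fun k => Real.iSup_nonneg fun _ => abs_nonneg _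
  have hM : ∀ k, 0 ≤ M k := fun k => Real.rpow_nonneg (hR0 k) _
  have hfinite : ∀ k, Finite {i : ℕ // 1 ≤ i ∧ i ≤ k} := fun k =>
    (Set.finite_Icc 1 k).to_subtype
  have haR : ∀ k i, 1 ≤ i → i ≤ k → |a (k, i)| ≤ R k := by
    intro k i h1 h2
    have := hfinite k
    exact le_ciSup (f := fun i : {i : ℕ // 1 ≤ i ∧ i ≤ k} => |a (k, i.1)|)
      (Set.finite_range _).bddAbove ⟨i, h1, h2⟩
  have hmax : ∀ k, ∃ i, 1 ≤ k → 1 ≤ i ∧ i ≤ k ∧ |a (k, i)| = R k := by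
    intro k
    by_cases hk : 1 ≤ k
    · have := hfinite k
      have : Nonempty {i : ℕ // 1 ≤ i ∧ i ≤ k} := ⟨⟨1, le_rfl, hk⟩⟩
      obtain ⟨i, hi⟩ := exists_eq_ciSup_of_finite
        (f := fun i : {i : ℕ // 1 ≤ i ∧ i ≤ k} => |a (k, i.1)|)
      exact ⟨i.1, fun _ => ⟨i.2.1, i.2.2, hi⟩⟩
    · exact ⟨0, fun h => absurd h hk⟩
  choose ι hι using hmax
  have hM0 : M 0 = 0 := by
    have : IsEmpty {i : ℕ // 1 ≤ i ∧ i ≤ 0} := ⟨fun i => by have := i.2; omega⟩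
    simp only [hMdef, hR, Real.iSup_of_isEmpty]
    exact Real.zero_rpow hp0.ne'
  obtain ⟨K, hK⟩ : ∃ K, ∀ k i, K ≤ k → a (k, i) = 0 := by
    obtain ⟨K, hK⟩ := (hfin.image Prod.fst).bddAbove
    refine ⟨K + 1, fun k i hk => ?_⟩
    by_contra h
    have := hK ⟨(k, i), h, rfl⟩
    simp only at this
    omega
  have hMK : ∀ k, K ≤ k → M k = 0 := by
    intro k hk
    have : R k = 0 := by simp [hR, hK k _ hk]
    simp only [hMdef, this]
    exact Real.zero_rpow hp0.ne'
  have hWp : WpNorm p a = (∑ k ∈ Finset.range K, M k) ^ (1 / p) := by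
    unfold WpNorm
    rw [tsum_eq_sum (s := Finset.range K)]
    intro k hk
    exact hMK k (by simpa using hk)
  have hbp : ∀ k i, 1 ≤ i → i ≤ k → ∀ j ∈ A (k, i),
      |b j| ^ p = |a (k, i)| ^ p / ∑ i ∈ Finset.range (n k), w i := by
    intro k i h1 h2 j hj
    have hc := Real.rpow_nonneg (hWpos k).le (1 / p)
    rw [hb k i h1 h2 j hj, abs_div, abs_of_nonneg hc, Real.div_rpow (abs_nonneg _) hc,
      ← Real.rpow_mul (hWpos k).le, one_div_mul_cancel hp0.ne', Real.rpow_one]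
  set E : ℕ → Finset ℕ := fun k => Finset.Ico (N k) (N (k + 1)) with hE
  have hEcard : ∀ k, (E k).card ≤ k * n k := fun k => by simp [hE, hNs]
  have hdom : ∀ j, |b j| ^ p ≤ ∑ k ∈ Finset.range K,
      if j ∈ E k then M k / ∑ i ∈ Finset.range (n k), w i else 0 := by
    intro j
    have hnn : ∀ k ∈ Finset.range K,
        0 ≤ if j ∈ E k then M k / ∑ i ∈ Finset.range (n k), w i else 0 := fun k _ => by
      split_ifs
      · exact div_nonneg (hM k) (hWpos k).le
      · exact le_rfl
    by_cases hj : ∃ k i, 1 ≤ i ∧ i ≤ k ∧ j ∈ A (k, i)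
    · obtain ⟨k, i, h1, h2, hj⟩ := hj
      rw [hbp k i h1 h2 j hj]
      by_cases hk : k < K
      · refine le_trans ?_ (Finset.single_le_sum hnn (Finset.mem_range.2 hk))
        rw [if_pos (Finset.mem_Ico.2 (hAE k i h1 h2 j hj))]
        have := (hWpos k).le
        gcongr
        exact Real.rpow_le_rpow (abs_nonneg _) (haR k i h1 h2) hp0.le
      · rw [hK k i (by omega), abs_zero, Real.zero_rpow hp0.ne', zero_div]
        exact Finset.sum_nonneg hnn
    · rw [hb0 j fun k i h1 h2 hj' => hj ⟨k, i, h1, h2, hj'⟩, abs_zero, Real.zero_rpow hp0.ne']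
      exact Finset.sum_nonneg hnn
  have hterm : ∀ (f : ℕ → ℕ) m, 0 ≤ |b (f m)| ^ p * w m := fun f m =>
    mul_nonneg (Real.rpow_nonneg (abs_nonneg _) _) (hw_pos m).le
  have hfinsum : ∀ f : ℕ → ℕ, StrictMono f → ∀ F : Finset ℕ,
      ∑ m ∈ F, |b (f m)| ^ p * w m ≤ 2 * ∑ k ∈ Finset.range K, M k :=
    fun f hf F => upper_sum w hw_pos hw_anti n hWpos hn2 E hEcard M hM K (fun j => |b j| ^ p)
      hdom f hf F
  have htot : 0 ≤ ∑ k ∈ Finset.range K, M k := Finset.sum_nonneg fun k _ => hM k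
  -- the constant `2` in the `p`-th powers becomes `2 ^ (1 / p) ≤ 2`
  have h2p : (2 : ℝ) ^ (1 / p) ≤ 2 := by
    calc (2 : ℝ) ^ (1 / p) ≤ 2 ^ (1 : ℝ) :=
          Real.rpow_le_rpow_of_exponent_le (by norm_num) (by rw [div_le_one hp0]; exact hp)
      _ = 2 := Real.rpow_one 2
  have hdouble : ∀ x : ℝ, 0 ≤ x → (2 * x) ^ (1 / p) ≤ 2 * x ^ (1 / p) := fun x hx => by
    rw [Real.mul_rpow (by norm_num) hx]
    exact mul_le_mul_of_nonneg_right h2p (Real.rpow_nonneg hx _)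
  have hupper : ∀ f : {f : ℕ → ℕ // StrictMono f},
      (∑' m : ℕ, |b (f.1 m)| ^ p * w m) ^ (1 / p) ≤ 2 * WpNorm p a := by
    intro f
    rw [hWp]
    refine le_trans (Real.rpow_le_rpow (tsum_nonneg (hterm f.1)) ?_ hip0.le) (hdouble _ htot)
    exact Real.tsum_le_of_sum_le (hterm f.1) (hfinsum f.1 f.2)
  have : Nonempty {f : ℕ → ℕ // StrictMono f} := ⟨⟨id, strictMono_id⟩⟩
  refine ⟨?_, ciSup_le hupper⟩
  obtain ⟨f, hf, F, hF⟩ := lower_sum w hw_pos hw_anti n (fun k => N k + (ι k - 1) * n k) hn1 hn3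
    (by
      intro k l hk hkl
      have := hidx k (ι k) (hι k hk).1 (hι k hk).2.1
      have h1 := hNmono (show k + 1 ≤ l from hkl)
      rw [hNs] at h1
      omega)
    M hM hM0 K (fun j => |b j| ^ p)
    (by
      intro k hk _ j hj1 hj2
      obtain ⟨h1, h2, h3⟩ := hι k hk
      rw [hbp k (ι k) h1 h2 j (Finset.mem_Ico.2 ⟨hj1, hj2⟩), h3])
  have hsum : Summable fun m => |b (f m)| ^ p * w m :=
    summable_of_sum_le (hterm f) (hfinsum f hf)
  have hle : ∑ k ∈ Finset.range K, M k ≤ 2 * ∑' m, |b (f m)| ^ p * w m :=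
    hF.trans (mul_le_mul_of_nonneg_left (hsum.sum_le_tsum F fun m _ => hterm f m) (by norm_num))
  have h1 : WpNorm p a ≤ 2 * (∑' m, |b (f m)| ^ p * w m) ^ (1 / p) := by
    rw [hWp]
    exact (Real.rpow_le_rpow htot hle hip0.le).trans (hdouble _ (tsum_nonneg (hterm f)))
  have hbdd : BddAbove (Set.range fun f : {f : ℕ → ℕ // StrictMono f} =>
      (∑' m : ℕ, |b (f.1 m)| ^ p * w m) ^ (1 / p)) :=
    ⟨_, Set.forall_mem_range.2 hupper⟩
  have h2 : (∑' m, |b (f m)| ^ p * w m) ^ (1 / p) ≤ garlingNorm w p b :=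
    le_ciSup hbdd ⟨f, hf⟩
  linarith
end

section
/- Let 1 ≤ p < ∞ and let E = (⊕_{n=1}^∞ c_0)_{ℓ_p} be the ℓ_p-direct sum of countably many copies of c_0. For each k ≥ 1 let x_k ∈ E be the vector whose n-th block, for 1 ≤ n ≤ k, equals k^{-1/p}e_k, and whose other blocks are 0. Then ‖x_k‖_E = 1 for every k, and there exists a constant C ≥ 1 such that for every finitely supported real sequence (a_j)_{j≥1}: C^{-1}·(∑_{n=1}^∞ (max_{2^{n-1} ≤ j ≤ 2^n−1}|a_j|)^p)^{1/p} ≤ ‖∑_{k=1}^∞ a_k x_k‖_E ≤ C·(∑_{n=1}^∞ (max_{2^{n-1} ≤ j ≤ 2^n−1}|a_j|)^p)^{1/p}; that is, (x_k)_{k=1}^∞ is a normalized sequence equivalent to the canonical basis of (⊕_{n=1}^∞ ℓ_∞^{2^{n-1}})_{ℓ_p}. -/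
/-!
Put `M_m = max |a_j|` over the dyadic block `2^m ≤ j < 2^(m+1)`, and `v = ∑ a_k x_k`. For
`n ≥ 1` the `n`-th block of `v` is the sequence `a_j j^{-1/p}` restricted to `j ≥ n`, so
`‖v‖^p = ∑_{n ≥ 1} s_n` with `s_n = sup_{j ≥ n} |a_j|^p / j`.

* Lower bound: if `1 ≤ n ≤ 2^m` then `M_m^p ≤ 2^(m+1) s_n`. Summing over
  `2^(m-1) < n ≤ 2^m` and then over `m` gives `∑ M_m^p ≤ 4 ∑ s_n` (`sum_le_four_mul`).
* Upper bound: `s_n` is at most the sum of `M_m^p / 2^m` over those `m` with `n < 2^(m+1)`.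
  Exchanging the sums gives `∑ s_n ≤ 2 ∑ M_m^p` (`sum_le_two_mul`).

Since `p ≥ 1`, taking `p`-th roots gives the equivalence with constant `4`.
-/

/-- The element of `c_0` (real sequences vanishing at infinity, modelled as
`ZeroAtInftyContinuousMap ℕ ℝ` with the supremum norm) having value `c` in coordinate `k`
and `0` elsewhere. -/
noncomputable def c0single (k : ℕ) (c : ℝ) : ZeroAtInftyContinuousMap ℕ ℝ where
  toFun := fun j => if j = k then c else 0
  continuous_toFun := continuous_of_discreteTopology
  zero_at_infty' := by
    rw [Filter.cocompact_eq_cofinite]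
    apply Filter.Tendsto.congr' _ tendsto_const_nhds
    rw [Filter.eventuallyEq_iff_exists_mem]
    exact ⟨{k}ᶜ, by simp [Filter.mem_cofinite],
      fun j hj => by simp only [Set.mem_compl_iff, Set.mem_singleton_iff] at hj; simp [hj]⟩

/-- The vector `x_k ∈ E = (⊕_{n=1}^∞ c_0)_{ℓ_p}` whose `n`-th block, for `1 ≤ n ≤ k`,
equals `k^{-1/p} e_k`, and whose other blocks vanish.  (Blocks are indexed by `n : ℕ`,
with block `0` permanently zero, so that blocks `1, 2, 3, …` are the paper's blocks;
`x_0 = 0` is a dummy value.) -/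
noncomputable def tandoriVec (p : ℝ) (k : ℕ) :
    lp (fun _ : ℕ => ZeroAtInftyContinuousMap ℕ ℝ) (ENNReal.ofReal p) :=
  ∑ n ∈ Finset.Icc 1 k, lp.single (ENNReal.ofReal p) n (c0single k ((k : ℝ) ^ (-(1 / p))))

lemma c0single_apply (k : ℕ) (c : ℝ) (j : ℕ) :
    c0single k c j = if j = k then c else 0 := rfl

lemma c0_norm_le {f : ZeroAtInftyContinuousMap ℕ ℝ} {R : ℝ} (hR : 0 ≤ R)
    (h : ∀ j, |f j| ≤ R) : ‖f‖ ≤ R := by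
  rw [← ZeroAtInftyContinuousMap.norm_toBCF_eq_norm, BoundedContinuousFunction.norm_le hR]
  exact h

lemma c0_abs_le (f : ZeroAtInftyContinuousMap ℕ ℝ) (j : ℕ) : |f j| ≤ ‖f‖ := by
  rw [← ZeroAtInftyContinuousMap.norm_toBCF_eq_norm]
  exact f.toBCF.norm_coe_le_norm j

lemma norm_c0single (k : ℕ) (c : ℝ) : ‖c0single k c‖ = |c| := by
  apply le_antisymm
  · refine c0_norm_le (abs_nonneg c) fun j => ?_
    rw [c0single_apply]
    split_ifs <;> simp
  · simpa [c0single_apply] using c0_abs_le (c0single k c) k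

lemma c0_sum_apply {ι : Type*} (s : Finset ι) (f : ι → ZeroAtInftyContinuousMap ℕ ℝ) (j : ℕ) :
    (∑ i ∈ s, f i) j = ∑ i ∈ s, f i j := by
  classical
  induction s using Finset.induction_on with
  | empty => simp
  | insert i s hi ih => simp [Finset.sum_insert hi, ih]

lemma rpow_neg_one_div_rpow {p : ℝ} (hp : 1 ≤ p) {x : ℝ} (hx : 0 ≤ x) :
    (x ^ (-(1 / p))) ^ p = x⁻¹ := by
  rw [← Real.rpow_mul hx]
  have : -(1 / p) * p = -1 := by field_simp
  rw [this, Real.rpow_neg_one]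

lemma norm_tandoriVec (p : ℝ) (hp : 1 ≤ p) [Fact (1 ≤ ENNReal.ofReal p)] (k : ℕ) (hk : 1 ≤ k) :
    ‖tandoriVec p k‖ = 1 := by
  have hp0 : 0 < p := by linarith
  have hr : (ENNReal.ofReal p).toReal = p := ENNReal.toReal_ofReal hp0.le
  have h := lp.norm_sum_single (p := ENNReal.ofReal p) (by rw [hr]; exact hp0)
    (fun _ : ℕ => c0single k ((k : ℝ) ^ (-(1 / p)))) (Finset.Icc 1 k)
  have hk' : (k : ℝ) ≠ 0 := by positivity
  rw [hr] at h
  simp only [norm_c0single, Finset.sum_const, Nat.card_Icc, Nat.add_sub_cancel,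
    nsmul_eq_mul] at h
  rw [abs_of_nonneg (by positivity), rpow_neg_one_div_rpow hp (by positivity),
    mul_inv_cancel₀ hk'] at h
  have h' : ‖tandoriVec p k‖ ^ p = 1 := h
  exact (Real.rpow_left_inj (norm_nonneg _) zero_le_one hp0.ne').1 (by simpa using h')

lemma tandoriVec_apply (p : ℝ) (k n j : ℕ) :
    tandoriVec p k n j
      = if j = k ∧ 1 ≤ n ∧ n ≤ k then (k : ℝ) ^ (-(1 / p)) else 0 := by
  rw [tandoriVec, lp.coeFn_sum, Finset.sum_apply, c0_sum_apply]
  have : ∀ i ∈ Finset.Icc 1 k,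
      (lp.single (E := fun _ : ℕ => ZeroAtInftyContinuousMap ℕ ℝ) (ENNReal.ofReal p) i
        (c0single k ((k : ℝ) ^ (-(1 / p)))) : ∀ _ : ℕ, _) n j
      = if n = i then (if j = k then (k : ℝ) ^ (-(1 / p)) else 0) else 0 := by
    intro i _
    by_cases h : n = i
    · subst h; simp [c0single_apply]
    · simp [h, lp.single_apply]
  rw [Finset.sum_congr rfl this, Finset.sum_ite_eq]
  simp only [Finset.mem_Icc]
  split_ifs <;> tauto

/-- The coordinates of `∑ a_k x_k`: blocks `n ≥ 1` are the truncations to `j ≥ n` of the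
single sequence `a_j j^{-1/p}`. -/
lemma sum_tandoriVec_apply (p : ℝ) [Fact (1 ≤ ENNReal.ofReal p)] (a : ℕ → ℝ) (L : ℕ)
    (hL : ∀ k, L ≤ k → a k = 0) (n j : ℕ) :
    (∑ k ∈ Finset.range L, a k • tandoriVec p k) n j
      = if 1 ≤ n ∧ n ≤ j then a j * (j : ℝ) ^ (-(1 / p)) else 0 := by
  rw [lp.coeFn_sum, Finset.sum_apply, c0_sum_apply]
  have : ∀ k ∈ Finset.range L, (a k • tandoriVec p k) n j
      = if j = k then (if 1 ≤ n ∧ n ≤ j then a j * (j : ℝ) ^ (-(1 / p)) else 0) else 0 := by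
    intro k _
    rw [lp.coeFn_smul, Pi.smul_apply, ZeroAtInftyContinuousMap.smul_apply, tandoriVec_apply]
    by_cases h : j = k
    · subst h; simp
    · simp [h]
  rw [Finset.sum_congr rfl this, Finset.sum_ite_eq]
  simp only [Finset.mem_range]
  by_cases h : j < L
  · simp [h]
  · simp [h, hL j (not_lt.1 h)]

/-- Lower dyadic estimate: the `2^K` indices in `(2^K, 2^(K+1)]` already carry a quarter of
`M (K+1)`. -/
lemma sum_le_four_mul (s M : ℕ → ℝ)
    (h : ∀ m n, 1 ≤ n → n ≤ 2 ^ m → M m ≤ 2 ^ (m + 1) * s n) (K : ℕ) (h1 : 0 ≤ s 1) :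
    ∑ m ∈ Finset.range (K + 1), M m ≤ 4 * ∑ n ∈ Finset.Ioc 0 (2 ^ K), s n := by
  induction K with
  | zero =>
    have := h 0 1 le_rfl (by norm_num)
    have h01 : Finset.Ioc 0 (2 ^ 0) = {1} := by decide
    rw [h01, Finset.sum_singleton, zero_add, Finset.sum_range_one]
    norm_num at this
    linarith
  | succ K ih =>
    rw [Finset.sum_range_succ, ← Finset.sum_Ioc_consecutive s (Nat.zero_le (2 ^ K))
      (Nat.pow_le_pow_right two_pos (Nat.le_succ K))]
    have hb : ∑ n ∈ Finset.Ioc (2 ^ K) (2 ^ (K + 1)), M (K + 1) / 2 ^ (K + 2)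
        ≤ ∑ n ∈ Finset.Ioc (2 ^ K) (2 ^ (K + 1)), s n := by
      refine Finset.sum_le_sum fun n hn => ?_
      rw [Finset.mem_Ioc] at hn
      rw [div_le_iff₀' (by positivity)]
      exact h (K + 1) n (by omega) hn.2
    rw [Finset.sum_const, Nat.card_Ioc, nsmul_eq_mul,
      show 2 ^ (K + 1) - 2 ^ K = 2 ^ K by rw [pow_succ]; omega] at hb
    have hc : ((2 ^ K : ℕ) : ℝ) * (M (K + 1) / 2 ^ (K + 2)) = M (K + 1) / 4 := by
      push_cast
      rw [pow_add]
      field_simp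
      norm_num
    linarith

/-- Upper dyadic estimate: after exchanging sums, `M m / 2^m` is counted for fewer than
`2^(m+1)` indices `n`. -/
lemma sum_le_two_mul (s M : ℕ → ℝ) (N L : ℕ) (hM : ∀ m, 0 ≤ M m)
    (h : ∀ n, 1 ≤ n →
      s n ≤ ∑ m ∈ Finset.range N, if n < 2 ^ (m + 1) then M m / 2 ^ m else 0) :
    ∑ n ∈ Finset.Ioc 0 L, s n ≤ 2 * ∑ m ∈ Finset.range N, M m := by
  refine (Finset.sum_le_sum fun n hn => h n (Finset.mem_Ioc.1 hn).1).trans ?_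
  rw [Finset.sum_comm, Finset.mul_sum]
  refine Finset.sum_le_sum fun m _ => ?_
  rw [← Finset.sum_filter, Finset.sum_const, nsmul_eq_mul]
  have hcard : ((Finset.Ioc 0 L).filter (fun n => n < 2 ^ (m + 1))).card ≤ 2 ^ (m + 1) := by
    calc _ ≤ (Finset.range (2 ^ (m + 1))).card := Finset.card_le_card fun n hn => by
            simpa using (Finset.mem_filter.1 hn).2
      _ = _ := Finset.card_range _
  have hcard' : (((Finset.Ioc 0 L).filter (fun n => n < 2 ^ (m + 1))).card : ℝ)
      ≤ 2 ^ (m + 1) := by exact_mod_cast hcard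
  calc _ ≤ (2 : ℝ) ^ (m + 1) * (M m / 2 ^ m) :=
        mul_le_mul_of_nonneg_right hcard' (div_nonneg (hM m) (by positivity))
    _ = 2 * M m := by rw [pow_succ]; field_simp

/-- `max |a_j|` over the dyadic block `2^m ≤ j ≤ 2^(m+1) - 1`. -/
noncomputable def blockMax (a : ℕ → ℝ) (m : ℕ) : ℝ :=
  ⨆ j : {j : ℕ // 2 ^ m ≤ j ∧ j ≤ 2 ^ (m + 1) - 1}, |a j.1|

lemma blockMax_nonneg (a : ℕ → ℝ) (m : ℕ) : 0 ≤ blockMax a m :=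
  Real.iSup_nonneg fun _ => abs_nonneg _

lemma le_blockMax (a : ℕ → ℝ) {m j : ℕ} (h1 : 2 ^ m ≤ j) (h2 : j < 2 ^ (m + 1)) :
    |a j| ≤ blockMax a m := by
  have : Finite {j : ℕ // 2 ^ m ≤ j ∧ j ≤ 2 ^ (m + 1) - 1} :=
    (Set.finite_Icc (2 ^ m) (2 ^ (m + 1) - 1)).to_subtype
  exact le_ciSup (f := fun j : {j : ℕ // 2 ^ m ≤ j ∧ j ≤ 2 ^ (m + 1) - 1} => |a j.1|)
    (Set.finite_range _).bddAbove ⟨j, h1, by omega⟩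

lemma blockMax_le (a : ℕ → ℝ) (m : ℕ) {c : ℝ} (hc : 0 ≤ c)
    (h : ∀ j, 2 ^ m ≤ j → j < 2 ^ (m + 1) → |a j| ≤ c) : blockMax a m ≤ c :=
  Real.iSup_le (fun j => h j.1 j.2.1 (by
    have := j.2.2
    have : 0 < 2 ^ (m + 1) := by positivity
    omega)) hc

/-- The two-sided estimate between `p`-th powers, `∑ M_m^p ≤ 4 ‖v‖^p` and
`‖v‖^p ≤ 2 ∑ M_m^p`, for `v = ∑ a_k x_k` with `a` supported below `2^N`. -/
lemma norm_rpow_bounds (p : ℝ) (hp : 1 ≤ p) [Fact (1 ≤ ENNReal.ofReal p)] (a : ℕ → ℝ) (N : ℕ)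
    (hN : ∀ k, 2 ^ N ≤ k → a k = 0)
    (v : lp (fun _ : ℕ => ZeroAtInftyContinuousMap ℕ ℝ) (ENNReal.ofReal p))
    (hv : ∀ n j, v n j = if 1 ≤ n ∧ n ≤ j then a j * (j : ℝ) ^ (-(1 / p)) else 0) :
    ∑ m ∈ Finset.range N, blockMax a m ^ p ≤ 4 * ‖v‖ ^ p ∧
      ‖v‖ ^ p ≤ 2 * ∑ m ∈ Finset.range N, blockMax a m ^ p := by
  have hp0 : 0 < p := by linarith
  have hr : (ENNReal.ofReal p).toReal = p := ENNReal.toReal_ofReal hp0.le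
  have hM0 : ∀ m, 0 ≤ blockMax a m ^ p := fun m => Real.rpow_nonneg (blockMax_nonneg a m) p
  have hs0 : ∀ n, 0 ≤ ‖v n‖ ^ p := fun n => Real.rpow_nonneg (norm_nonneg _) p
  have hcoord : ∀ n j, 1 ≤ n → n ≤ j → |v n j| ^ p = |a j| ^ p * (j : ℝ)⁻¹ := by
    intro n j h1 h2
    rw [hv, if_pos ⟨h1, h2⟩, abs_mul, Real.mul_rpow (abs_nonneg _) (abs_nonneg _),
      abs_of_nonneg (by positivity : 0 ≤ (j : ℝ) ^ (-(1 / p))),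
      rpow_neg_one_div_rpow hp (Nat.cast_nonneg j)]
  have hzero : ∀ n, n ∉ Finset.Ioc 0 (2 ^ N) → ‖v n‖ ^ p = 0 := by
    intro n hn
    have : v n = 0 := by
      ext j
      rw [hv]
      split_ifs with h
      · rw [Finset.mem_Ioc] at hn
        rw [hN j (by omega)]; simp
      · rfl
    rw [this, norm_zero, Real.zero_rpow hp0.ne']
  have hnorm : ‖v‖ ^ p = ∑ n ∈ Finset.Ioc 0 (2 ^ N), ‖v n‖ ^ p := by
    have h := lp.norm_rpow_eq_tsum (p := ENNReal.ofReal p) (by rw [hr]; exact hp0) v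
    rw [hr] at h
    rw [h, tsum_eq_sum hzero]
  rw [hnorm]
  constructor
  · have hlow : ∀ m n, 1 ≤ n → n ≤ 2 ^ m →
        blockMax a m ^ p ≤ 2 ^ (m + 1) * ‖v n‖ ^ p := by
      intro m n h1 h2
      have hR : (0 : ℝ) ≤ 2 ^ (m + 1) * ‖v n‖ ^ p := mul_nonneg (by positivity) (hs0 n)
      have hle : blockMax a m ≤ (2 ^ (m + 1) * ‖v n‖ ^ p) ^ p⁻¹ := by
        refine blockMax_le a m (Real.rpow_nonneg hR _) fun j hj1 hj2 => ?_
        rw [Real.le_rpow_inv_iff_of_pos (abs_nonneg _) hR hp0]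
        have hj0 : (0 : ℝ) < j := by
          have : 0 < j := by omega
          exact_mod_cast this
        have e := Real.rpow_le_rpow (abs_nonneg _) (c0_abs_le (v n) j) hp0.le
        rw [hcoord n j h1 (h2.trans hj1), ← div_eq_mul_inv, div_le_iff₀' hj0] at e
        have hj2' : (j : ℝ) ≤ 2 ^ (m + 1) := by exact_mod_cast hj2.le
        exact e.trans (mul_le_mul_of_nonneg_right hj2' (hs0 n))
      exact (Real.le_rpow_inv_iff_of_pos (blockMax_nonneg a m) hR hp0).1 hle
    refine le_trans ?_ (sum_le_four_mul (fun n => ‖v n‖ ^ p) (fun m => blockMax a m ^ p)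
      hlow N (hs0 1))
    exact Finset.sum_le_sum_of_subset_of_nonneg
      (Finset.range_mono (Nat.le_succ N)) fun m _ _ => hM0 m
  · refine sum_le_two_mul (fun n => ‖v n‖ ^ p) (fun m => blockMax a m ^ p) N _ hM0 fun n hn => ?_
    have hterm : ∀ m, 0 ≤ if n < 2 ^ (m + 1) then blockMax a m ^ p / 2 ^ m else 0 := by
      intro m
      split_ifs
      · exact div_nonneg (hM0 m) (by positivity)
      · exact le_rfl
    have hR := Finset.sum_nonneg fun m (_ : m ∈ Finset.range N) => hterm m
    rw [← Real.le_rpow_inv_iff_of_pos (norm_nonneg _) hR hp0]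
    refine c0_norm_le (Real.rpow_nonneg hR _) fun j => ?_
    rw [Real.le_rpow_inv_iff_of_pos (abs_nonneg _) hR hp0]
    by_cases hj : n ≤ j ∧ j < 2 ^ N
    · -- `j` lies in the dyadic block number `Nat.log 2 j`
      have hj0 : j ≠ 0 := by omega
      have hm1 : 2 ^ Nat.log 2 j ≤ j := Nat.pow_log_le_self 2 hj0
      have hm2 : j < 2 ^ (Nat.log 2 j + 1) := Nat.lt_pow_succ_log_self one_lt_two j
      have hmN : Nat.log 2 j ∈ Finset.range N :=
        Finset.mem_range.2 ((Nat.pow_lt_pow_iff_right one_lt_two).1 (hm1.trans_lt hj.2))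
      refine le_trans ?_ (Finset.single_le_sum (fun m _ => hterm m) hmN)
      rw [if_pos (hj.1.trans_lt hm2), hcoord n j hn hj.1, ← div_eq_mul_inv]
      exact div_le_div₀ (hM0 _)
        (Real.rpow_le_rpow (abs_nonneg _) (le_blockMax a hm1 hm2) hp0.le)
        (by positivity) (by exact_mod_cast hm1)
    · have : v n j = 0 := by
        rw [hv]
        split_ifs with h
        · rw [hN j (by omega)]; simp
        · rfl
      rw [this, abs_zero, Real.zero_rpow hp0.ne']
      exact hR

/-- Let `1 ≤ p < ∞` and let `E = (⊕_{n=1}^∞ c_0)_{ℓ_p}`.  For `k ≥ 1` let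
`x_k ∈ E` be the vector whose `n`-th block, for `1 ≤ n ≤ k`, equals `k^{-1/p} e_k`, and
whose other blocks vanish.  Then `‖x_k‖_E = 1` for every `k ≥ 1`, and there exists `C ≥ 1`
such that for every finitely supported real sequence `(a_j)_{j≥1}`:
`C⁻¹ (∑_{n=1}^∞ (max_{2^{n-1} ≤ j ≤ 2^n - 1} |a_j|)^p)^{1/p} ≤ ‖∑_k a_k x_k‖_E
  ≤ C (∑_{n=1}^∞ (max_{2^{n-1} ≤ j ≤ 2^n - 1} |a_j|)^p)^{1/p}`
(the paper's block `2^{n-1} ≤ j ≤ 2^n - 1`, `n = 1, 2, …`, is written below as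
`2^n ≤ j ≤ 2^(n+1) - 1` with `n : ℕ` running over `0, 1, 2, …`).  That is, `(x_k)_{k≥1}`
is a normalized sequence equivalent to the canonical basis of
`(⊕_{n=1}^∞ ℓ_∞^{2^{n-1}})_{ℓ_p}`. -/
theorem stmt_8 (p : ℝ) (hp : 1 ≤ p) [Fact (1 ≤ ENNReal.ofReal p)] :
    (∀ k : ℕ, 1 ≤ k → ‖tandoriVec p k‖ = 1) ∧
    ∃ C : ℝ, 1 ≤ C ∧
      ∀ a : ℕ → ℝ, (Function.support a).Finite →
        C⁻¹ * (∑' n : ℕ, (⨆ j : {j : ℕ // 2 ^ n ≤ j ∧ j ≤ 2 ^ (n + 1) - 1},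
            |a j.1|) ^ p) ^ (1 / p) ≤ ‖∑' k : ℕ, a k • tandoriVec p k‖ ∧
        ‖∑' k : ℕ, a k • tandoriVec p k‖ ≤
          C * (∑' n : ℕ, (⨆ j : {j : ℕ // 2 ^ n ≤ j ∧ j ≤ 2 ^ (n + 1) - 1},
            |a j.1|) ^ p) ^ (1 / p) := by
  have hp0 : 0 < p := by linarith
  refine ⟨norm_tandoriVec p hp, 4, by norm_num, fun a ha => ?_⟩
  obtain ⟨B, hB⟩ := ha.bddAbove
  have hN : ∀ k, 2 ^ (B + 1) ≤ k → a k = 0 := by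
    intro k hk
    by_contra h
    have h1 : k ≤ B := hB h
    have h2 : B + 1 < 2 ^ (B + 1) := Nat.lt_two_pow_self
    omega
  have hsum : ∑' k : ℕ, a k • tandoriVec p k
      = ∑ k ∈ Finset.range (2 ^ (B + 1)), a k • tandoriVec p k :=
    tsum_eq_sum fun k hk => by
      rw [hN k (by simpa using hk), zero_smul]
  have hM : ∑' n : ℕ, (⨆ j : {j : ℕ // 2 ^ n ≤ j ∧ j ≤ 2 ^ (n + 1) - 1}, |a j.1|) ^ p
      = ∑ m ∈ Finset.range (B + 1), blockMax a m ^ p := by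
    refine tsum_eq_sum (f := fun m => blockMax a m ^ p) fun m hm => ?_
    have hle : blockMax a m ≤ 0 := blockMax_le a m le_rfl fun j hj _ => by
      rw [hN j (le_trans (Nat.pow_le_pow_right two_pos (by simpa using hm)) hj), abs_zero]
    rw [le_antisymm hle (blockMax_nonneg a m), Real.zero_rpow hp0.ne']
  rw [hM, hsum, one_div]
  obtain ⟨h1, h2⟩ := norm_rpow_bounds p hp a (B + 1) hN _
    (sum_tandoriVec_apply p a (2 ^ (B + 1)) hN)
  set v := ∑ k ∈ Finset.range (2 ^ (B + 1)), a k • tandoriVec p k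
  set S := ∑ m ∈ Finset.range (B + 1), blockMax a m ^ p
  have hS : 0 ≤ S := Finset.sum_nonneg fun m _ => Real.rpow_nonneg (blockMax_nonneg a m) p
  have h4 : (4 : ℝ) ≤ 4 ^ p := Real.self_le_rpow_of_one_le (by norm_num) hp
  have hv : 0 ≤ ‖v‖ ^ p := Real.rpow_nonneg (norm_nonneg _) p
  constructor
  · rw [inv_mul_le_iff₀ (by norm_num), Real.rpow_inv_le_iff_of_pos hS (by positivity) hp0,
      Real.mul_rpow (by norm_num) (norm_nonneg _)]
    exact h1.trans (mul_le_mul_of_nonneg_right h4 hv)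
  · rw [← Real.rpow_le_rpow_iff (norm_nonneg _) (by positivity) hp0,
      Real.mul_rpow (by norm_num) (by positivity), Real.rpow_inv_rpow hS hp0.ne']
    exact h2.trans (mul_le_mul_of_nonneg_right (by linarith) hS)
end
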